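/- arXiv:1411.0742 — 6 statements merged into one kernel-verified Lean document; each statement's English description precedes it below -/
import Mathlib

section
/- Let 𝒜 be an abelian category, I a directed partial order, and F : I ⥤ 𝒜 a functor. Then the following are equivalent: (i) F satisfies the kernel-stabilization condition; (ii) there exist a directed partial order J and a functor G : J ⥤ 𝒜 all of whose transition morphisms G(j) → G(j′) (for j ≤ j′ in J) are monomorphisms, such that F and G present isomorphic ind-objects. -/
open CategoryTheory CategoryTheory.Limits

universe v u

/-- A functor `F : I ⥤ 𝒜` from a directed partial order to an abelian category satisfies the
*kernel-stabilization condition* if for every `i` there is some `j ≥ i` such that for every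
`l ≥ j` the kernel of the transition `F i ⟶ F l` coincides with the kernel of `F i ⟶ F j`
as a subobject of `F i`. -/
def KernelStabilization {𝒜 : Type u} [Category.{v} 𝒜] [Abelian 𝒜]
    {I : Type v} [PartialOrder I] (F : I ⥤ 𝒜) : Prop :=
  ∀ i : I, ∃ (j : I) (hij : i ≤ j), ∀ (l : I) (hjl : j ≤ l),
    kernelSubobject (F.map (homOfLE (hij.trans hjl))) =
      kernelSubobject (F.map (homOfLE hij))

/-- Two diagrams indexed by directed partial orders *present isomorphic ind-objects* if the
colimits of their compositions with the Yoneda embedding (in the presheaf category) are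
isomorphic. -/
def PresentIsoInd {𝒜 : Type u} [Category.{v} 𝒜]
    {I : Type v} [Preorder I] {J : Type v} [Preorder J]
    (F : I ⥤ 𝒜) (G : J ⥤ 𝒜) : Prop :=
  Nonempty (colimit (F ⋙ yoneda) ≅ colimit (G ⋙ yoneda))

/-!
Call a transition `f : i ⟶ j` kernel-stable if `F.map f` kills every morphism into `F.obj i` that
becomes zero further along `F`; kernel stabilization says that there is one out of every `i`.

If `F` and `G` present the same ind-object, the structure morphism of `F.obj i` factors through some
`G.obj j` and some `F.obj l`, so a transition `i ⟶ l` factors as `F.obj i ⟶ G.obj j ⟶ F.obj l`.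
When `G` has monomorphic transitions, `G.obj j` embeds into the ind-object, so the first factor
already kills whatever dies along `F`, and the transition is kernel-stable.

Conversely, given kernel-stable transitions `f i : i ⟶ s i`, the coimages of the `F.map (f i)` are
the quotients of the `F.obj i` by all that eventually dies. They form a system with monomorphic
transitions, interleaved with `F` through `F.obj i ↠ coimage (F.map (f i)) ↪ F.obj (s i)`.
-/

section Colimits

variable {C : Type*} [Category* C] {I : Type*} [Category* I] [IsFilteredOrEmpty I]

lemma isIso_colimMap_of_interleaving {F G : I ⥤ C} [HasColimit F] [HasColimit G] (α : F ⟶ G)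
    {s : I → I} {f : ∀ i, i ⟶ s i} (m : ∀ i, G.obj i ⟶ F.obj (s i))
    (app_comp_m : ∀ i, α.app i ≫ m i = F.map (f i))
    (m_comp_app : ∀ i, m i ≫ α.app (s i) = G.map (f i)) :
    IsIso (colimMap α) := by
  have m_natural {i j : I} (g : i ⟶ j) :
      G.map g ≫ m j ≫ colimit.ι F (s j) = m i ≫ colimit.ι F (s i) := by
    obtain ⟨k, u, v, huv⟩ := IsFiltered.span (g ≫ f j) (f i)
    -- The two sides need not agree at stage `k`, but they do after applying `α`, hence at `s k`.
    have agree_after_app :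
        (G.map g ≫ m j ≫ F.map u) ≫ α.app k = (m i ≫ F.map v) ≫ α.app k := by
      simp only [Category.assoc, α.naturality, reassoc_of% m_comp_app, ← G.map_comp]
      rw [← huv, Category.assoc]
    have agree : (G.map g ≫ m j ≫ F.map u) ≫ F.map (f k) = (m i ≫ F.map v) ≫ F.map (f k) := by
      simpa only [Category.assoc, app_comp_m] using agree_after_app =≫ m k
    simpa only [Category.assoc, colimit.w] using agree =≫ colimit.ι F (s k)
  let inverse : colimit G ⟶ colimit F := colimit.desc G
    { pt := colimit F
      ι :=
        { app := fun i ↦ m i ≫ colimit.ι F (s i)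
          naturality := fun _ _ g ↦ (m_natural g).trans (Category.comp_id _).symm } }
  refine ⟨inverse, colimit.hom_ext fun i ↦ ?_, colimit.hom_ext fun i ↦ ?_⟩
  · simp [inverse, reassoc_of% app_comp_m]
  · simp [inverse, reassoc_of% m_comp_app]

end Colimits

section IndObjects

variable {C : Type u} [Category.{v} C] {I J : Type v} [SmallCategory I] [SmallCategory J]

lemma exists_yoneda_map_comp_colimit_ι_eq {F : I ⥤ C} {X : C}
    (φ : yoneda.obj X ⟶ colimit (F ⋙ yoneda)) :
    ∃ (i : I) (f : X ⟶ F.obj i), yoneda.map f ≫ colimit.ι (F ⋙ yoneda) i = φ := by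
  obtain ⟨i, p, hp⟩ :=
    exists_hom_of_preservesColimit_coyoneda (colimit.isColimit (F ⋙ yoneda)) φ
  obtain ⟨f, rfl⟩ := yoneda.map_surjective p
  exact ⟨i, f, hp⟩

lemma exists_comp_map_eq_of_yoneda_map_comp_colimit_ι_eq [IsFilteredOrEmpty I] {F : I ⥤ C} {X : C}
    {i j : I} {f : X ⟶ F.obj i} {g : X ⟶ F.obj j}
    (h : yoneda.map f ≫ colimit.ι (F ⋙ yoneda) i = yoneda.map g ≫ colimit.ι (F ⋙ yoneda) j) :
    ∃ (k : I) (u : i ⟶ k) (v : j ⟶ k), f ≫ F.map u = g ≫ F.map v := by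
  have : IsFiltered I := { nonempty := ⟨i⟩ }
  obtain ⟨k, u, v, huv⟩ :=
    exists_eq_of_preservesColimit_coyoneda (colimit.isColimit (F ⋙ yoneda)) _ _ h
  exact ⟨k, u, v, yoneda.map_injective (by simpa using huv)⟩

lemma eq_of_yoneda_map_comp_colimit_ι_eq [IsFilteredOrEmpty I] {F : I ⥤ C}
    (hF : ∀ ⦃i j : I⦄ (u : i ⟶ j), Mono (F.map u)) {X : C} {i : I} {f g : X ⟶ F.obj i}
    (h : yoneda.map f ≫ colimit.ι (F ⋙ yoneda) i = yoneda.map g ≫ colimit.ι (F ⋙ yoneda) i) :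
    f = g := by
  have : IsFiltered I := { nonempty := ⟨i⟩ }
  obtain ⟨k, u, huv⟩ :=
    exists_eq_of_preservesColimit_coyoneda_self (colimit.isColimit (F ⋙ yoneda)) _ _ h
  have := hF u
  exact (cancel_mono (F.map u)).1 (yoneda.map_injective (by simpa using huv))

lemma exists_factorization_of_colimit_yoneda_iso [IsFilteredOrEmpty I] {F : I ⥤ C} {G : J ⥤ C}
    (e : colimit (F ⋙ yoneda) ≅ colimit (G ⋙ yoneda)) (i : I) :
    ∃ (j : J) (a : F.obj i ⟶ G.obj j) (l : I) (f : i ⟶ l) (b : G.obj j ⟶ F.obj l),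
      yoneda.map a ≫ colimit.ι (G ⋙ yoneda) j = colimit.ι (F ⋙ yoneda) i ≫ e.hom ∧
        a ≫ b = F.map f := by
  obtain ⟨j, a, ha⟩ := exists_yoneda_map_comp_colimit_ι_eq (colimit.ι (F ⋙ yoneda) i ≫ e.hom)
  obtain ⟨k, b, hb⟩ := exists_yoneda_map_comp_colimit_ι_eq (colimit.ι (G ⋙ yoneda) j ≫ e.inv)
  have hab : yoneda.map (a ≫ b) ≫ colimit.ι (F ⋙ yoneda) k =
      yoneda.map (𝟙 _) ≫ colimit.ι (F ⋙ yoneda) i := by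
    rw [yoneda.map_comp, Category.assoc, hb, reassoc_of% ha, e.hom_inv_id, yoneda.map_id]
    exact (Category.comp_id _).trans (Category.id_comp _).symm
  obtain ⟨l, u, f, huf⟩ := exists_comp_map_eq_of_yoneda_map_comp_colimit_ι_eq hab
  exact ⟨j, a, l, f, b ≫ F.map u, ha, by simpa using huf⟩

end IndObjects

section KernelStable

/-- A morphism `f : i ⟶ j` of the index category is *kernel-stable* for `F` if the kernel of
`F.map f` contains the kernel of every transition morphism out of `F.obj i`. This is phrased through
morphisms `t` into `F.obj i`, so that no kernel has to exist. -/
def IsKernelStable {C : Type*} [Category* C] [HasZeroMorphisms C] {I : Type*} [Category* I]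
    (F : I ⥤ C) {i j : I} (f : i ⟶ j) : Prop :=
  ∀ ⦃l : I⦄ (g : i ⟶ l) ⦃X : C⦄ (t : X ⟶ F.obj i), t ≫ F.map g = 0 → t ≫ F.map f = 0

lemma IsKernelStable.comp_map_comp_map_eq_zero {C : Type*} [Category* C] [HasZeroMorphisms C]
    {I : Type*} [Category* I] [IsFilteredOrEmpty I] {F : I ⥤ C} {j k : I} {f : j ⟶ k}
    (hf : IsKernelStable F f) {i l : I} (g : i ⟶ j) (f' : i ⟶ l) {X : C} {t : X ⟶ F.obj i}
    (ht : t ≫ F.map f' = 0) :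
    t ≫ F.map g ≫ F.map f = 0 := by
  obtain ⟨m, u, v, huv⟩ := IsFiltered.span g f'
  rw [← Category.assoc]
  refine hf u _ ?_
  rw [Category.assoc, ← F.map_comp, huv, F.map_comp, reassoc_of% ht, zero_comp]

lemma kernelSubobject_comp_eq_iff {C : Type*} [Category* C] [HasZeroMorphisms C] {X Y Z : C}
    (f : X ⟶ Y) (g : Y ⟶ Z) [HasKernel f] [HasKernel (f ≫ g)] :
    kernelSubobject (f ≫ g) = kernelSubobject f ↔
      ∀ ⦃W : C⦄ (t : W ⟶ X), t ≫ f ≫ g = 0 → t ≫ f = 0 := by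
  constructor
  · intro h W t ht
    rwa [← kernelSubobject_factors_iff, ← h, kernelSubobject_factors_iff]
  · intro h
    exact (kernelSubobject_comp_le f g).antisymm'
      (le_kernelSubobject f _ (h _ (kernelSubobject_arrow_comp _)))

lemma kernelStabilization_iff_forall_exists_isKernelStable {𝒜 : Type u} [Category.{v} 𝒜]
    [Abelian 𝒜] {I : Type v} [PartialOrder I] [IsDirected I (· ≤ ·)] {F : I ⥤ 𝒜} :
    KernelStabilization F ↔ ∀ i, ∃ (j : I) (f : i ⟶ j), IsKernelStable F f := by
  have kernel_eq_iff {i j l : I} (hij : i ≤ j) (hjl : j ≤ l) :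
      kernelSubobject (F.map (homOfLE (hij.trans hjl))) = kernelSubobject (F.map (homOfLE hij)) ↔
        ∀ ⦃X : 𝒜⦄ (t : X ⟶ F.obj i),
          t ≫ F.map (homOfLE (hij.trans hjl)) = 0 → t ≫ F.map (homOfLE hij) = 0 := by
    simp only [← homOfLE_comp hij hjl, F.map_comp, kernelSubobject_comp_eq_iff]
  refine forall_congr' fun i ↦ ⟨?_, ?_⟩
  · rintro ⟨j, hij, hj⟩
    refine ⟨j, homOfLE hij, fun l g X t ht ↦ ?_⟩
    obtain ⟨m, hjm, hlm⟩ := exists_ge_ge j l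
    refine (kernel_eq_iff hij hjm).1 (hj m hjm) t ?_
    have through_l : homOfLE (hij.trans hjm) = g ≫ homOfLE hlm := Subsingleton.elim _ _
    rw [through_l, F.map_comp, reassoc_of% ht, zero_comp]
  · rintro ⟨j, f, hf⟩
    exact ⟨j, leOfHom f, fun l hjl ↦ (kernel_eq_iff (leOfHom f) hjl).2 fun _ t ↦ hf _ t⟩

theorem exists_isKernelStable_of_colimit_yoneda_iso {C : Type u} [Category.{v} C]
    [HasZeroMorphisms C] {I J : Type v} [SmallCategory I] [IsFilteredOrEmpty I]
    [SmallCategory J] [IsFilteredOrEmpty J] {F : I ⥤ C} {G : J ⥤ C}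
    (hG : ∀ ⦃j j' : J⦄ (g : j ⟶ j'), Mono (G.map g))
    (e : colimit (F ⋙ yoneda) ≅ colimit (G ⋙ yoneda)) (i : I) :
    ∃ (l : I) (f : i ⟶ l), IsKernelStable F f := by
  obtain ⟨j, a, l, f, b, ha, hab⟩ := exists_factorization_of_colimit_yoneda_iso e i
  refine ⟨l, f, fun m g X t ht ↦ ?_⟩
  have t_dies : yoneda.map t ≫ colimit.ι (F ⋙ yoneda) i =
      yoneda.map 0 ≫ colimit.ι (F ⋙ yoneda) i := by
    rw [← colimit.w (F ⋙ yoneda) g, Functor.comp_map, ← yoneda.map_comp_assoc,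
      ← yoneda.map_comp_assoc, ht, zero_comp]
  have t_comp_a : t ≫ a = 0 ≫ a := by
    refine eq_of_yoneda_map_comp_colimit_ι_eq hG ?_
    rw [yoneda.map_comp_assoc, yoneda.map_comp_assoc, ha, reassoc_of% t_dies]
  rw [← hab, reassoc_of% t_comp_a, zero_comp]

end KernelStable

section KernelStableQuotient

variable {𝒜 : Type*} [Category* 𝒜] [Abelian 𝒜]

lemma comp_coimage_π_eq_zero_iff {X Y Z : 𝒜} {t : X ⟶ Y} {f : Y ⟶ Z} :
    t ≫ Abelian.coimage.π f = 0 ↔ t ≫ f = 0 := by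
  refine ⟨fun h ↦ ?_, Abelian.comp_coimage_π_eq_zero⟩
  rw [← Abelian.coimage.fac f, reassoc_of% h, zero_comp]

lemma mono_of_epi_comp_cancel_zero {X Y Z : 𝒜} (q : X ⟶ Y) [Epi q] (g : Y ⟶ Z)
    (h : ∀ ⦃W : 𝒜⦄ (t : W ⟶ X), t ≫ q ≫ g = 0 → t ≫ q = 0) : Mono g := by
  refine Preadditive.mono_of_cancel_zero g fun {W} y hy ↦ ?_
  obtain ⟨W', π, _, t, hπ⟩ := surjective_up_to_refinements_of_epi q y
  rw [← cancel_epi π, hπ, comp_zero]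
  exact h t (by rw [← reassoc_of% hπ, hy, comp_zero])

variable {I : Type*} [Category* I] [IsFilteredOrEmpty I] {F : I ⥤ 𝒜}
  {s : I → I} {f : ∀ i, i ⟶ s i}

/-- The system of quotients of the `F.obj i` by everything that eventually becomes zero along `F`.
The quotient at `i` is encoded as the coimage of a chosen kernel-stable transition out of `i`. -/
noncomputable def kernelStableQuotient (hf : ∀ i, IsKernelStable F (f i)) : I ⥤ 𝒜 where
  obj i := Abelian.coimage (F.map (f i))
  map {i j} g := cokernel.desc _ (F.map g ≫ Abelian.coimage.π (F.map (f j))) <| by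
    rw [← Category.assoc, comp_coimage_π_eq_zero_iff, Category.assoc]
    exact (hf j).comp_map_comp_map_eq_zero g (f i) (kernel.condition _)
  map_id i := by
    rw [← cancel_epi (Abelian.coimage.π _)]
    simp
  map_comp g h := by
    rw [← cancel_epi (Abelian.coimage.π _)]
    simp

variable (hf : ∀ i, IsKernelStable F (f i))

/-- The projection of a system onto its quotient by everything that eventually becomes zero. -/
noncomputable def kernelStableQuotientπ : F ⟶ kernelStableQuotient hf where
  app i := Abelian.coimage.π (F.map (f i))
  naturality _ _ _ := (cokernel.π_desc _ _ _).symm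

instance epi_kernelStableQuotientπ_app (i : I) : Epi ((kernelStableQuotientπ hf).app i) :=
  inferInstanceAs (Epi (Abelian.coimage.π _))

lemma comp_kernelStableQuotientπ_app_eq_zero_iff {X : 𝒜} {i : I} {t : X ⟶ F.obj i} :
    t ≫ (kernelStableQuotientπ hf).app i = 0 ↔ t ≫ F.map (f i) = 0 :=
  comp_coimage_π_eq_zero_iff

lemma mono_kernelStableQuotient_map {i j : I} (g : i ⟶ j) :
    Mono ((kernelStableQuotient hf).map g) := by
  refine mono_of_epi_comp_cancel_zero ((kernelStableQuotientπ hf).app i) _ fun X t ht ↦ ?_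
  rw [← NatTrans.naturality, ← Category.assoc, comp_kernelStableQuotientπ_app_eq_zero_iff,
    Category.assoc, ← F.map_comp] at ht
  exact (comp_kernelStableQuotientπ_app_eq_zero_iff hf).2 (hf i _ t ht)

lemma isIso_colimMap_whiskerRight_kernelStableQuotientπ {D : Type*} [Category* D] (H : 𝒜 ⥤ D)
    [HasColimit (F ⋙ H)] [HasColimit (kernelStableQuotient hf ⋙ H)] :
    IsIso (colimMap (Functor.whiskerRight (kernelStableQuotientπ hf) H)) := by
  let m (i : I) : (kernelStableQuotient hf).obj i ⟶ F.obj (s i) :=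
    Abelian.factorThruCoimage (F.map (f i))
  have π_comp_m (i : I) : (kernelStableQuotientπ hf).app i ≫ m i = F.map (f i) :=
    Abelian.coimage.fac _
  have m_comp_π (i : I) :
      m i ≫ (kernelStableQuotientπ hf).app (s i) = (kernelStableQuotient hf).map (f i) := by
    rw [← cancel_epi ((kernelStableQuotientπ hf).app i), reassoc_of% π_comp_m, NatTrans.naturality]
  refine isIso_colimMap_of_interleaving _ (f := f) (fun i ↦ H.map (m i)) (fun i ↦ ?_) fun i ↦ ?_
  · simp [← H.map_comp, π_comp_m]
  · simp [← H.map_comp, m_comp_π]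

end KernelStableQuotient

/-- `F` satisfies the kernel-stabilization condition iff it presents an ind-object
isomorphic to one presented by a system with monomorphic transition morphisms. -/
theorem statement0 {𝒜 : Type u} [Category.{v} 𝒜] [Abelian 𝒜]
    {I : Type v} [PartialOrder I] [IsDirected I (· ≤ ·)] (F : I ⥤ 𝒜) :
    KernelStabilization F ↔
      ∃ (J : Type v) (_ : PartialOrder J) (_ : IsDirected J (· ≤ ·)) (G : J ⥤ 𝒜),
        (∀ (j j' : J) (h : j ≤ j'), Mono (G.map (homOfLE h))) ∧ PresentIsoInd F G := by
  rw [kernelStabilization_iff_forall_exists_isKernelStable]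
  constructor
  · intro h
    choose s f hf using h
    have := isIso_colimMap_whiskerRight_kernelStableQuotientπ hf yoneda
    exact ⟨I, inferInstance, inferInstance, kernelStableQuotient hf,
      fun _ _ h ↦ mono_kernelStableQuotient_map hf (homOfLE h),
      ⟨asIso (colimMap (Functor.whiskerRight (kernelStableQuotientπ hf) yoneda))⟩⟩
  · rintro ⟨J, _, _, G, hG, ⟨e⟩⟩
    exact exists_isKernelStable_of_colimit_yoneda_iso (fun _ _ g ↦ hG _ _ (leOfHom g)) e
end

section
/- Let 𝒜 be an abelian category and I a directed partial order. Let F′, F, F″ : I ⥤ 𝒜 be functors together with natural transformations α : F′ ⟶ F and β : F ⟶ F″ such that for every i ∈ I the sequence 0 → F′(i) → F(i) → F″(i) → 0 is a short exact sequence in 𝒜. If F′ and F″ satisfy the kernel-stabilization condition, then F satisfies the kernel-stabilization condition. -/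
open CategoryTheory CategoryTheory.Limits

universe v u

section KernelComparison

variable {C : Type*} [Category* C]

lemma comp_eq_zero_of_kernelSubobject_le [HasZeroMorphisms C] {T X Y Z : C}
    {f : X ⟶ Y} {g : X ⟶ Z} [HasKernel f] [HasKernel g]
    (h : kernelSubobject f ≤ kernelSubobject g) {x : T ⟶ X} (hx : x ≫ f = 0) :
    x ≫ g = 0 :=
  (kernelSubobject_factors_iff g x).1 <|
    Subobject.factors_of_le x h (kernelSubobject_factors f x hx)

variable [Preadditive C] [Balanced C] [HasKernels C]
  {R S P Q : ShortComplex C} [Mono S.f] [Mono Q.f]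

-- By `h₃`, the composite `x ≫ φ.τ₂` is killed by `S.g`, so it lifts to `S.X₁`, where `h₁` applies.
lemma comp_comp_τ₂_eq_zero_of_kernelSubobject_le (hS : S.Exact)
    (φ : R ⟶ S) (ψ : S ⟶ P) (χ : S ⟶ Q)
    (h₁ : kernelSubobject χ.τ₁ ≤ kernelSubobject ψ.τ₁)
    (h₃ : kernelSubobject (φ ≫ χ).τ₃ ≤ kernelSubobject φ.τ₃)
    {T : C} {x : T ⟶ R.X₂} (hx : x ≫ (φ ≫ χ).τ₂ = 0) :
    x ≫ (φ ≫ ψ).τ₂ = 0 := by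
  have hx₃ : (x ≫ R.g) ≫ φ.τ₃ = 0 := by
    refine comp_eq_zero_of_kernelSubobject_le h₃ ?_
    rw [Category.assoc, ← (φ ≫ χ).comm₂₃, reassoc_of% hx, zero_comp]
  obtain ⟨y, hy⟩ : ∃ y, y ≫ S.f = x ≫ φ.τ₂ :=
    hS.lift' (x ≫ φ.τ₂) (by rw [Category.assoc, φ.comm₂₃, ← Category.assoc, hx₃])
  have hy₁ : y ≫ ψ.τ₁ = 0 := by
    refine comp_eq_zero_of_kernelSubobject_le h₁ ?_
    rw [← cancel_mono Q.f, Category.assoc, χ.comm₁₂, reassoc_of% hy, ← ShortComplex.comp_τ₂, hx,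
      zero_comp]
  calc x ≫ (φ ≫ ψ).τ₂ = y ≫ S.f ≫ ψ.τ₂ := by rw [ShortComplex.comp_τ₂, reassoc_of% hy]
    _ = y ≫ ψ.τ₁ ≫ P.f := by rw [ψ.comm₁₂]
    _ = 0 := by rw [reassoc_of% hy₁, zero_comp]

lemma kernelSubobject_comp_τ₂_le_of_exact (hS : S.Exact) (φ : R ⟶ S) (ψ : S ⟶ P) (χ : S ⟶ Q)
    (h₁ : kernelSubobject χ.τ₁ ≤ kernelSubobject ψ.τ₁)
    (h₃ : kernelSubobject (φ ≫ χ).τ₃ ≤ kernelSubobject φ.τ₃) :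
    kernelSubobject (φ ≫ χ).τ₂ ≤ kernelSubobject (φ ≫ ψ).τ₂ :=
  le_kernelSubobject _ _ <|
    comp_comp_τ₂_eq_zero_of_kernelSubobject_le hS φ ψ χ h₁ h₃ (kernelSubobject_arrow_comp _)

end KernelComparison

section KernelStabilization

variable {𝒜 : Type u} [Category.{v} 𝒜] [Abelian 𝒜] {I : Type v} [PartialOrder I]

lemma kernelStabilization_of_kernelSubobject_le {F : I ⥤ 𝒜}
    (h : ∀ i : I, ∃ (j : I) (hij : i ≤ j), ∀ (l : I) (hjl : j ≤ l),
      kernelSubobject (F.map (homOfLE (hij.trans hjl))) ≤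
        kernelSubobject (F.map (homOfLE hij))) :
    KernelStabilization F := by
  intro i
  obtain ⟨j, hij, hj⟩ := h i
  refine ⟨j, hij, fun l hjl => (hj l hjl).antisymm ?_⟩
  rw [← homOfLE_comp hij hjl, F.map_comp]
  exact kernelSubobject_comp_le _ _

theorem statement1_general (F' F F'' : I ⥤ 𝒜) (α : F' ⟶ F) (β : F ⟶ F'')
    (hw : ∀ i : I, α.app i ≫ β.app i = 0) (hα : ∀ i : I, Mono (α.app i))
    (hex : ∀ i : I, (ShortComplex.mk (α.app i) (β.app i) (hw i)).Exact)
    (h' : KernelStabilization F') (h'' : KernelStabilization F'') :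
    KernelStabilization F := by
  let S : I ⥤ ShortComplex 𝒜 :=
    (ShortComplex.FunctorEquivalence.functor I 𝒜).obj (.mk α β (by ext i; exact hw i))
  have (i : I) : Mono (S.obj i).f := hα i
  refine kernelStabilization_of_kernelSubobject_le fun i => ?_
  -- `F'` must be stabilized starting from `j`: the lift to `F'` exists only after the transition
  -- `F i ⟶ F j`.
  obtain ⟨j, hij, hj⟩ := h'' i
  obtain ⟨k, hjk, hk⟩ := h' j
  refine ⟨k, hij.trans hjk, fun l hkl => ?_⟩
  have hjl : j ≤ l := hjk.trans hkl
  have kernel_le := kernelSubobject_comp_τ₂_le_of_exact (S := S.obj j) (hex j)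
    (S.map (homOfLE hij)) (S.map (homOfLE hjk)) (S.map (homOfLE hjl)) (hk l hkl).le
  rw [← S.map_comp, ← S.map_comp] at kernel_le
  exact kernel_le (hj l hjl).le

end KernelStabilization

/-- if `0 ⟶ F′ ⟶ F ⟶ F″ ⟶ 0` is a short exact sequence of `I`-indexed systems
(objectwise short exact) and `F′`, `F″` satisfy the kernel-stabilization condition, then so
does `F`. -/
theorem statement1 {𝒜 : Type u} [Category.{v} 𝒜] [Abelian 𝒜]
    {I : Type v} [PartialOrder I] [IsDirected I (· ≤ ·)]
    (F' F F'' : I ⥤ 𝒜) (α : F' ⟶ F) (β : F ⟶ F'')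
    (hw : ∀ i : I, α.app i ≫ β.app i = 0)
    (hse : ∀ i : I, (ShortComplex.mk (α.app i) (β.app i) (hw i)).ShortExact)
    (h' : KernelStabilization F') (h'' : KernelStabilization F'') :
    KernelStabilization F := by
  exact statement1_general F' F F'' α β hw (fun i => (hse i).mono_f)
    (fun i => (hse i).exact) h' h''
end

section
/- Let 𝒜 be an abelian category, I a directed partial order, and F : Iᵒᵖ ⥤ 𝒜 an inverse system. Then the following are equivalent: (i) F satisfies the image-stabilization condition; (ii) there exist a directed partial order J and an inverse system G : Jᵒᵖ ⥤ 𝒜 all of whose transition morphisms G(j′) → G(j) (for j ≤ j′ in J) are epimorphisms, such that F and G present isomorphic pro-objects. -/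
open CategoryTheory CategoryTheory.Limits Opposite

universe v u

/-- An inverse system `F : Iᵒᵖ ⥤ 𝒜` indexed by a directed partial order, with values in an
abelian category, satisfies the *image-stabilization condition* if for every `i` there is some
`j ≥ i` such that for every `l ≥ j` the image of the transition `F l ⟶ F i` coincides with the
image of `F j ⟶ F i` as a subobject of `F i`. -/
def ImageStabilization {𝒜 : Type u} [Category.{v} 𝒜] [Abelian 𝒜]
    {I : Type v} [PartialOrder I] (F : Iᵒᵖ ⥤ 𝒜) : Prop :=
  ∀ i : I, ∃ (j : I) (hij : i ≤ j), ∀ (l : I) (hjl : j ≤ l),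
    imageSubobject (F.map (homOfLE (hij.trans hjl)).op) =
      imageSubobject (F.map (homOfLE hij).op)

/-- Two inverse systems `F : Iᵒᵖ ⥤ 𝒜` and `G : Jᵒᵖ ⥤ 𝒜` *present isomorphic pro-objects* if
the corresponding diagrams `I ⥤ 𝒜ᵒᵖ` and `J ⥤ 𝒜ᵒᵖ` present isomorphic ind-objects over
`𝒜ᵒᵖ`. -/
def PresentIsoPro {𝒜 : Type u} [Category.{v} 𝒜]
    {I : Type v} [Preorder I] {J : Type v} [Preorder J]
    (F : Iᵒᵖ ⥤ 𝒜) (G : Jᵒᵖ ⥤ 𝒜) : Prop :=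
  PresentIsoInd F.rightOp G.rightOp

/-!
If `F` has stable images, the stable images form a subsystem of `F` with epimorphic transition
morphisms, and far enough transition morphisms of `F` factor through it, so the inclusion is
invertible on pro-objects. Conversely, an epimorphic system has stable images trivially, and
stability of images passes to retracts of pro-objects: a morphism of pro-objects `G ⟶ F` is
represented at stage `i` by some `b : G j ⟶ F i`, which may be precomposed with a transition
morphism of `G` until its image is stable; then `im b` is contained in the image of `F l ⟶ F i` for
every `l`, and contains it for large `l` because some `F l ⟶ F i` factors through `b`.
-/

section IndObjects

variable {C : Type u} [Category.{v} C] {J : Type v} [SmallCategory J]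

lemma exists_yoneda_map_comp_ι_eq {D : J ⥤ C} {X : C}
    (x : yoneda.obj X ⟶ colimit (D ⋙ yoneda)) :
    ∃ (j : J) (f : X ⟶ D.obj j), yoneda.map f ≫ colimit.ι (D ⋙ yoneda) j = x := by
  obtain ⟨j, y, hy⟩ := Types.jointly_surjective_of_isColimit
    (isColimitOfPreserves (coyoneda.obj (op (yoneda.obj X)))
      (colimit.isColimit (D ⋙ yoneda))) x
  obtain ⟨f, rfl⟩ := yoneda.map_surjective y
  exact ⟨j, f, hy⟩

lemma exists_comp_map_eq_of_yoneda_map_comp_ι_eq [IsFilteredOrEmpty J] {D : J ⥤ C} {X : C}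
    {j k : J} {f : X ⟶ D.obj j} {g : X ⟶ D.obj k}
    (h : yoneda.map f ≫ colimit.ι (D ⋙ yoneda) j = yoneda.map g ≫ colimit.ι (D ⋙ yoneda) k) :
    ∃ (l : J) (u : j ⟶ l) (v : k ⟶ l), f ≫ D.map u = g ≫ D.map v := by
  obtain ⟨l, u, v, huv⟩ := (Types.FilteredColimit.isColimit_eq_iff _
    (isColimitOfPreserves (coyoneda.obj (op (yoneda.obj X)))
      (colimit.isColimit (D ⋙ yoneda)))).1 h
  exact ⟨l, u, v, yoneda.map_injective (by simpa using huv)⟩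

variable {I : Type v} [SmallCategory I] {D : I ⥤ C} {E : J ⥤ C}

/-- The morphism `b : D i ⟶ E j` represents the restriction to the stage `i` of the morphism of
ind-objects `φ`. -/
def RepresentsAt (φ : colimit (D ⋙ yoneda) ⟶ colimit (E ⋙ yoneda)) {i : I} {j : J}
    (b : D.obj i ⟶ E.obj j) : Prop :=
  yoneda.map b ≫ colimit.ι (E ⋙ yoneda) j = colimit.ι (D ⋙ yoneda) i ≫ φ

variable {φ : colimit (D ⋙ yoneda) ⟶ colimit (E ⋙ yoneda)}

variable (φ) in
lemma exists_representsAt (i : I) :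
    ∃ (j : J) (b : D.obj i ⟶ E.obj j), RepresentsAt φ b :=
  exists_yoneda_map_comp_ι_eq _

namespace RepresentsAt

variable {i : I} {j : J} {b : D.obj i ⟶ E.obj j}

lemma comp_map (hb : RepresentsAt φ b) {k : J} (u : j ⟶ k) : RepresentsAt φ (b ≫ E.map u) := by
  rw [RepresentsAt, yoneda.map_comp, Category.assoc, ← hb]
  exact congrArg (yoneda.map b ≫ ·) (colimit.w (E ⋙ yoneda) u)

lemma map_comp {i' : I} {c : D.obj i' ⟶ E.obj j} (hc : RepresentsAt φ c) (f : i ⟶ i') :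
    RepresentsAt φ (D.map f ≫ c) := by
  rw [RepresentsAt, yoneda.map_comp, Category.assoc, hc, ← Category.assoc]
  exact congrArg (· ≫ φ) (colimit.w (D ⋙ yoneda) f)

lemma comp {K : Type v} [SmallCategory K] {H : K ⥤ C}
    {ψ : colimit (E ⋙ yoneda) ⟶ colimit (H ⋙ yoneda)} {k : K} {c : E.obj j ⟶ H.obj k}
    (hb : RepresentsAt φ b) (hc : RepresentsAt ψ c) : RepresentsAt (φ ≫ ψ) (b ≫ c) := by
  rw [RepresentsAt, yoneda.map_comp, Category.assoc, hc, ← Category.assoc, hb, Category.assoc]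

variable (D) in
lemma id (i : I) : RepresentsAt (𝟙 (colimit (D ⋙ yoneda))) (𝟙 (D.obj i)) := by
  rw [RepresentsAt, Category.comp_id, yoneda.map_id]
  exact Category.id_comp _

lemma exists_comp_map_eq [IsFilteredOrEmpty J] {k : J} {c : D.obj i ⟶ E.obj k}
    (hb : RepresentsAt φ b) (hc : RepresentsAt φ c) :
    ∃ (l : J) (u : j ⟶ l) (v : k ⟶ l), b ≫ E.map u = c ≫ E.map v :=
  exists_comp_map_eq_of_yoneda_map_comp_ι_eq (hb.trans hc.symm)

lemma exists_map_comp_eq_comp_map [IsFilteredOrEmpty J] (hb : RepresentsAt φ b) {i' : I}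
    (f : i ⟶ i') :
    ∃ (k : J) (u : j ⟶ k) (c : D.obj i' ⟶ E.obj k), D.map f ≫ c = b ≫ E.map u := by
  obtain ⟨j', c, hc⟩ := exists_representsAt φ i'
  obtain ⟨k, u, v, huv⟩ := hb.exists_comp_map_eq (hc.map_comp f)
  exact ⟨k, u, c ≫ E.map v, by rw [huv, Category.assoc]⟩

lemma exists_comp_eq_map [IsFilteredOrEmpty I] [IsSplitMono φ] (hb : RepresentsAt φ b) :
    ∃ (k : I) (f : i ⟶ k) (a : E.obj j ⟶ D.obj k), b ≫ a = D.map f := by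
  obtain ⟨i', a, ha⟩ := exists_representsAt (retraction φ) j
  have hba : RepresentsAt (𝟙 _) (b ≫ a) := IsSplitMono.id φ ▸ hb.comp ha
  obtain ⟨k, u, f, huf⟩ := hba.exists_comp_map_eq (id D i)
  exact ⟨k, f, a ≫ D.map u, by rw [← Category.assoc, huf, Category.id_comp]⟩

end RepresentsAt

end IndObjects

section IndIso

variable {C : Type*} [Category* C] {J : Type*} [Category* J] {D E : J ⥤ C}

/-- A natural transformation through which, at every stage, some transition morphisms of `D` and
`E` factor compatibly: a levelwise criterion for being invertible as a morphism of ind-objects.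
The morphisms `r` are not required to be natural in `j`. -/
def IsIndIso (α : D ⟶ E) : Prop :=
  ∀ j, ∃ (k : J) (f : j ⟶ k) (r : E.obj j ⟶ D.obj k),
    α.app j ≫ r = D.map f ∧ r ≫ α.app k = E.map f

namespace IsIndIso

variable {α : D ⟶ E}

lemma whiskerRight {C' : Type*} [Category* C'] (hα : IsIndIso α) (H : C ⥤ C') :
    IsIndIso (Functor.whiskerRight α H) := fun j ↦ by
  obtain ⟨k, f, r, hD, hE⟩ := hα j
  exact ⟨k, f, H.map r, by simp [← H.map_comp, hD], by simp [← H.map_comp, hE]⟩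

lemma comp_ι_eq_comp_ι (hα : IsIndIso α) (c : Cocone D) {X : C} {k k' l : J}
    {r : X ⟶ D.obj k} {r' : X ⟶ D.obj k'} (u : k ⟶ l) (u' : k' ⟶ l)
    (h : r ≫ α.app k ≫ E.map u = r' ≫ α.app k' ≫ E.map u') :
    r ≫ c.ι.app k = r' ≫ c.ι.app k' := by
  obtain ⟨m, f, s, hs, -⟩ := hα l
  have hfac {k₀ : J} (t : X ⟶ D.obj k₀) (w : k₀ ⟶ l) :
      t ≫ c.ι.app k₀ = (t ≫ α.app k₀ ≫ E.map w) ≫ s ≫ c.ι.app m := by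
    rw [← α.naturality, Category.assoc, Category.assoc, reassoc_of% hs, c.w, c.w]
  rw [hfac r u, hfac r' u', h]

variable [IsFilteredOrEmpty J] [HasColimit D] [HasColimit E]

lemma isIso_colimMap (hα : IsIndIso α) : IsIso (colimMap α) := by
  choose k f r hD hE using hα
  let c : Cocone E :=
    { pt := colimit D
      ι :=
        { app := fun j ↦ r j ≫ colimit.ι D (k j)
          naturality := fun j j' g ↦ by
            obtain ⟨l, u, u', huu'⟩ := IsFiltered.span (g ≫ f j') (f j)
            have h : (E.map g ≫ r j') ≫ α.app (k j') ≫ E.map u =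
                r j ≫ α.app (k j) ≫ E.map u' := by
              rw [Category.assoc, reassoc_of% hE, reassoc_of% hE, ← E.map_comp, ← E.map_comp,
                ← E.map_comp, ← huu', Category.assoc]
            simpa using comp_ι_eq_comp_ι (fun j ↦ ⟨k j, f j, r j, hD j, hE j⟩)
              (colimit.cocone D) u u' h } }
  refine ⟨colimit.desc E c, colimit.hom_ext fun j ↦ ?_, colimit.hom_ext fun j ↦ ?_⟩
  · simp [c, reassoc_of% hD]
  · simp [c, reassoc_of% hE]

end IsIndIso

end IndIso

lemma presentIsoPro_of_mono {C : Type u} [Category.{v} C] {I : Type v} [Preorder I]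
    [IsDirected I (· ≤ ·)] {F G : Iᵒᵖ ⥤ C} (ι : G ⟶ F) [∀ i, Mono (ι.app i)]
    (h : ∀ i, ∃ (j : Iᵒᵖ) (f : j ⟶ i) (r : F.obj j ⟶ G.obj i), r ≫ ι.app i = F.map f) :
    PresentIsoPro F G := by
  have hι : IsIndIso (NatTrans.rightOp ι) := fun i ↦ by
    obtain ⟨j, f, r, hr⟩ := h (op i)
    have hr' : ι.app j ≫ r = G.map f := by
      rw [← cancel_mono (ι.app (op i)), Category.assoc, hr, ι.naturality]
    exact ⟨j.unop, f.unop, r.op, congrArg Quiver.Hom.op hr, congrArg Quiver.Hom.op hr'⟩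
  have := (hι.whiskerRight yoneda).isIso_colimMap
  exact ⟨asIso (colimMap (Functor.whiskerRight (NatTrans.rightOp ι) yoneda))⟩

section Images

variable {C : Type*} [Category* C]

lemma factors_of_imageSubobject_eq {X Y : C} {f : X ⟶ Y} [HasImage f] {P : Subobject Y}
    (h : imageSubobject f = P) : P.Factors f := by
  subst h
  simpa using imageSubobject_factors_comp_self f (𝟙 X)

lemma imageSubobject_map_comp_le {K : Type*} [Category* K] [HasImages C] (F : K ⥤ C)
    {i j k : K} (f : i ⟶ j) (g : j ⟶ k) :
    imageSubobject (F.map (f ≫ g)) ≤ imageSubobject (F.map g) := by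
  rw [F.map_comp]
  exact imageSubobject_comp_le _ _

variable [HasEqualizers C]

lemma epi_factorThru_of_imageSubobject_eq {X Y : C} {f : X ⟶ Y} [HasImage f] {P : Subobject Y}
    (h : imageSubobject f = P) : Epi (P.factorThru f (factors_of_imageSubobject_eq h)) := by
  subst h
  have heq : (imageSubobject f).factorThru f (factors_of_imageSubobject_eq rfl) =
      factorThruImageSubobject f := by simp [← cancel_mono (imageSubobject f).arrow]
  rw [heq]
  infer_instance

variable [Balanced C] [HasImages C]

lemma imageSubobject_epi_comp {X Y Z : C} (f : X ⟶ Y) [Epi f] (g : Y ⟶ Z) :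
    imageSubobject (f ≫ g) = imageSubobject g := by
  have := isIso_of_mono_of_epi (Subobject.ofLE _ _ (imageSubobject_comp_le f g))
  exact le_antisymm (imageSubobject_comp_le f g)
    (Subobject.le_of_comm (inv (Subobject.ofLE _ _ (imageSubobject_comp_le f g))) (by simp))

lemma imageSubobject_arrow_comp_eq_imageSubobject_comp {X Y Z : C} (f : X ⟶ Y) (g : Y ⟶ Z) :
    imageSubobject ((imageSubobject f).arrow ≫ g) = imageSubobject (f ≫ g) := by
  rw [← imageSubobject_epi_comp (factorThruImageSubobject f), imageSubobject_arrow_comp_assoc]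

end Images

section Subsystem

variable {C : Type*} [Category* C] {K : Type*} [Category* K] (F : K ⥤ C)
  (S : ∀ k, Subobject (F.obj k))
  (hS : ∀ {k l : K} (f : k ⟶ l), (S l).Factors ((S k).arrow ≫ F.map f))

/-- The subfunctor of `F` given by a family of subobjects `S k` of `F k` which the transition
morphisms of `F` map into one another. -/
noncomputable def subsystem : K ⥤ C where
  obj k := S k
  map f := (S _).factorThru _ (hS f)
  map_id k := by simp
  map_comp {_ _ m} f g := by simp [← cancel_mono (S m).arrow]

/-- The inclusion of a subsystem. -/
noncomputable def subsystemι : subsystem F S hS ⟶ F where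
  app k := (S k).arrow
  naturality _ _ f := Subobject.factorThru_arrow _ _ (hS f)

instance mono_subsystemι_app (k : K) : Mono ((subsystemι F S hS).app k) :=
  inferInstanceAs (Mono (S k).arrow)

end Subsystem

namespace ImageStabilization

variable {𝒜 : Type u} [Category.{v} 𝒜] [Abelian 𝒜] {I : Type v} [PartialOrder I] {F : Iᵒᵖ ⥤ 𝒜}

lemma exists_imageSubobject_eq (hF : ImageStabilization F) (i : Iᵒᵖ) :
    ∃ (S : Subobject (F.obj i)) (j : Iᵒᵖ) (f : j ⟶ i), ∀ (l : Iᵒᵖ) (g : l ⟶ j),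
      imageSubobject (F.map (g ≫ f)) = S := by
  obtain ⟨j, hij, hj⟩ := hF i.unop
  exact ⟨_, op j, (homOfLE hij).op, fun l g ↦ hj l.unop (leOfHom g.unop)⟩

/-- The common image in `F i` of all `F l` with `l` large. -/
noncomputable def stableImage (hF : ImageStabilization F) (i : Iᵒᵖ) : Subobject (F.obj i) :=
  (hF.exists_imageSubobject_eq i).choose

lemma exists_imageSubobject_eq_stableImage (hF : ImageStabilization F) (i : Iᵒᵖ) :
    ∃ (j : Iᵒᵖ) (f : j ⟶ i), ∀ (l : Iᵒᵖ) (g : l ⟶ j),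
      imageSubobject (F.map (g ≫ f)) = hF.stableImage i :=
  (hF.exists_imageSubobject_eq i).choose_spec

lemma imageSubobject_stableImage_arrow_comp_map [IsDirected I (· ≤ ·)]
    (hF : ImageStabilization F) {i j : Iᵒᵖ} (f : i ⟶ j) :
    imageSubobject ((hF.stableImage i).arrow ≫ F.map f) = hF.stableImage j := by
  obtain ⟨i', u, hu⟩ := hF.exists_imageSubobject_eq_stableImage i
  obtain ⟨j', w, hw⟩ := hF.exists_imageSubobject_eq_stableImage j
  obtain ⟨l, hil, hjl⟩ := directed_of (· ≤ ·) i'.unop j'.unop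
  let p : op l ⟶ i' := (homOfLE hil).op
  let q : op l ⟶ j' := (homOfLE hjl).op
  rw [← hu _ p, imageSubobject_arrow_comp_eq_imageSubobject_comp, ← F.map_comp, ← hw _ q,
    Subsingleton.elim ((p ≫ u) ≫ f) (q ≫ w)]

lemma stableImage_factors [IsDirected I (· ≤ ·)] (hF : ImageStabilization F) {i j : Iᵒᵖ}
    (f : i ⟶ j) : (hF.stableImage j).Factors ((hF.stableImage i).arrow ≫ F.map f) :=
  factors_of_imageSubobject_eq (hF.imageSubobject_stableImage_arrow_comp_map f)

/-- The inverse system of stable images: the epimorphic system presenting the same pro-object as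
`F`. -/
noncomputable abbrev stableSystem [IsDirected I (· ≤ ·)] (hF : ImageStabilization F) : Iᵒᵖ ⥤ 𝒜 :=
  subsystem F hF.stableImage hF.stableImage_factors

lemma epi_stableSystem_map [IsDirected I (· ≤ ·)] (hF : ImageStabilization F) {i j : Iᵒᵖ}
    (f : i ⟶ j) : Epi (hF.stableSystem.map f) :=
  epi_factorThru_of_imageSubobject_eq (hF.imageSubobject_stableImage_arrow_comp_map f)

lemma presentIsoPro_stableSystem [IsDirected I (· ≤ ·)] (hF : ImageStabilization F) :
    PresentIsoPro F hF.stableSystem := by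
  refine presentIsoPro_of_mono (subsystemι F hF.stableImage hF.stableImage_factors) fun i ↦ ?_
  obtain ⟨j, f, hf⟩ := hF.exists_imageSubobject_eq_stableImage i
  have hfac : (hF.stableImage i).Factors (F.map f) :=
    factors_of_imageSubobject_eq (by simpa using hf j (𝟙 j))
  exact ⟨j, f, (hF.stableImage i).factorThru _ hfac, Subobject.factorThru_arrow _ _ hfac⟩

lemma of_epi (hF : ∀ (i j : I) (h : i ≤ j), Epi (F.map (homOfLE h).op)) :
    ImageStabilization F := fun i ↦ ⟨i, le_rfl, fun l hl ↦ by
  have := hF i l hl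
  rw [← imageSubobject_epi_comp (F.map (homOfLE hl).op), ← F.map_comp]
  rfl⟩

lemma of_isSplitMono [IsDirected I (· ≤ ·)] {J : Type v} [PartialOrder J]
    [IsDirected J (· ≤ ·)] {G : Jᵒᵖ ⥤ 𝒜} (hG : ImageStabilization G)
    (φ : colimit (F.rightOp ⋙ yoneda) ⟶ colimit (G.rightOp ⋙ yoneda)) [IsSplitMono φ] :
    ImageStabilization F := by
  intro i
  obtain ⟨j, b, hb⟩ := exists_representsAt φ i
  obtain ⟨k, w, hw⟩ := hG.exists_imageSubobject_eq_stableImage (op j)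
  let T := imageSubobject ((hG.stableImage (op j)).arrow ≫ b.unop)
  have hT {m : Jᵒᵖ} (g : m ⟶ k) : imageSubobject (G.map (g ≫ w) ≫ b.unop) = T := by
    rw [← imageSubobject_arrow_comp_eq_imageSubobject_comp, hw]
  have hb' : RepresentsAt φ (b ≫ G.rightOp.map w.unop) := hb.comp_map _
  obtain ⟨l, f, a, ha⟩ := hb'.exists_comp_eq_map
  have image_le : imageSubobject (F.map f.op) ≤ T := by
    have hf : a.unop ≫ G.map (𝟙 k ≫ w) ≫ b.unop = F.map f.op := by
      rw [Category.id_comp]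
      exact congrArg Quiver.Hom.unop ha
    rw [← hf, ← hT (𝟙 k)]
    exact imageSubobject_comp_le _ _
  have le_image (l' : I) (f' : i ⟶ l') : T ≤ imageSubobject (F.map f'.op) := by
    obtain ⟨m, u, c, hc⟩ := hb'.exists_map_comp_eq_comp_map f'
    have hf' : c.unop ≫ F.map f'.op = G.map (u.op ≫ w) ≫ b.unop := by
      rw [G.map_comp, Category.assoc]
      exact congrArg Quiver.Hom.unop hc
    rw [← hT u.op, ← hf']
    exact imageSubobject_comp_le _ _
  refine ⟨l, leOfHom f, fun l' hl' ↦ le_antisymm ?_ (image_le.trans (le_image l' _))⟩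
  exact imageSubobject_map_comp_le F (homOfLE hl').op f.op

end ImageStabilization

/-- an inverse system `F` satisfies the image-stabilization condition iff it
presents a pro-object isomorphic to one presented by an inverse system with epimorphic
transition morphisms. -/
theorem statement2 {𝒜 : Type u} [Category.{v} 𝒜] [Abelian 𝒜]
    {I : Type v} [PartialOrder I] [IsDirected I (· ≤ ·)] (F : Iᵒᵖ ⥤ 𝒜) :
    ImageStabilization F ↔
      ∃ (J : Type v) (_ : PartialOrder J) (_ : IsDirected J (· ≤ ·)) (G : Jᵒᵖ ⥤ 𝒜),
        (∀ (j j' : J) (h : j ≤ j'), Epi (G.map (homOfLE h).op)) ∧ PresentIsoPro F G := by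
  constructor
  · exact fun hF ↦ ⟨I, inferInstance, inferInstance, hF.stableSystem,
      fun _ _ _ ↦ hF.epi_stableSystem_map _, hF.presentIsoPro_stableSystem⟩
  · rintro ⟨J, _, _, G, hG, ⟨e⟩⟩
    exact (ImageStabilization.of_epi hG).of_isSplitMono e.hom
end

section
/- Let 𝒜 be an abelian category and I a directed partial order. Let F′, F, F″ : Iᵒᵖ ⥤ 𝒜 be inverse systems together with natural transformations α : F′ ⟶ F and β : F ⟶ F″ such that for every i ∈ I the sequence 0 → F′(i) → F(i) → F″(i) → 0 is a short exact sequence in 𝒜. If F′ and F″ satisfy the image-stabilization condition, then F satisfies the image-stabilization condition. -/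
open CategoryTheory CategoryTheory.Limits Opposite

universe v u

/-!
Given `i`, choose `j ≥ i` at which the images of `F'` in `F' i` stabilize, and then `k ≥ j` at which
the images of `F''` in `F'' j` stabilize. For `l ≥ k`, stabilization for `F''` puts the image of
`F k` in `F j` inside `im (F l ⟶ F j) + im (F' j ⟶ F j)`. Pushing this forward to `F i`, the second
summand becomes the image of `F' j ⟶ F' i ⟶ F i`, which by stabilization for `F'` is already reached
from `F' l`, hence from `F l`.
-/

section Image

variable {𝒜 : Type u} [Category.{v} 𝒜] [Abelian 𝒜] {X Y Z W : 𝒜}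

lemma imageSubobject_le_imageSubobject_iff (f : X ⟶ Z) (g : Y ⟶ Z) :
    imageSubobject f ≤ imageSubobject g ↔
      ∃ (A : 𝒜) (π : A ⟶ X) (_ : Epi π) (y : A ⟶ Y), π ≫ f = y ≫ g := by
  constructor
  · intro h
    obtain ⟨A, π, hπ, y, hy⟩ := surjective_up_to_refinements_of_epi
      (factorThruImageSubobject g) (factorThruImageSubobject f ≫ Subobject.ofLE _ _ h)
    exact ⟨A, π, hπ, y, by simpa using hy =≫ (imageSubobject g).arrow⟩
  · rintro ⟨A, π, _, y, hy⟩
    have sq : CommSq (y ≫ factorThruImageSubobject g) π (imageSubobject g).arrow f :=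
      ⟨by simp [hy]⟩
    have := strongEpi_of_epi π
    exact imageSubobject_le f sq.lift sq.fac_right

lemma imageSubobject_comp_mono {f : X ⟶ Z} {g : Y ⟶ Z}
    (h : imageSubobject f ≤ imageSubobject g) (k : Z ⟶ W) :
    imageSubobject (f ≫ k) ≤ imageSubobject (g ≫ k) := by
  obtain ⟨A, π, hπ, y, hy⟩ := (imageSubobject_le_imageSubobject_iff f g).1 h
  exact (imageSubobject_le_imageSubobject_iff _ _).2 ⟨A, π, hπ, y, by simpa using hy =≫ k⟩

lemma imageSubobject_biprod_desc (f : X ⟶ Z) (g : Y ⟶ Z) :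
    imageSubobject (biprod.desc f g) = imageSubobject f ⊔ imageSubobject g := by
  apply le_antisymm
  · have hf := Subobject.sup_factors_of_factors_left (Y := imageSubobject g)
      (imageSubobject_factors_comp_self f (𝟙 X))
    have hg := Subobject.sup_factors_of_factors_right (X := imageSubobject f)
      (imageSubobject_factors_comp_self g (𝟙 Y))
    refine imageSubobject_le _
      (biprod.desc (Subobject.factorThru _ _ hf) (Subobject.factorThru _ _ hg)) ?_
    ext <;> simp
  · refine sup_le ?_ ?_
    · simpa using imageSubobject_comp_le biprod.inl (biprod.desc f g)
    · simpa using imageSubobject_comp_le biprod.inr (biprod.desc f g)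

lemma imageSubobject_comp_le_sup {V : 𝒜} {f : V ⟶ Z} {g : X ⟶ Z} {h : Y ⟶ Z}
    (hfgh : imageSubobject f ≤ imageSubobject g ⊔ imageSubobject h) (k : Z ⟶ W) :
    imageSubobject (f ≫ k) ≤ imageSubobject (g ≫ k) ⊔ imageSubobject (h ≫ k) := by
  have desc_comp : biprod.desc g h ≫ k = biprod.desc (g ≫ k) (h ≫ k) := by ext <;> simp
  rw [← imageSubobject_biprod_desc] at hfgh ⊢
  simpa only [desc_comp] using imageSubobject_comp_mono hfgh k

end Image

section ShortComplex

variable {𝒜 : Type u} [Category.{v} 𝒜] [Abelian 𝒜] {S₀ S₁ S₂ S₃ : ShortComplex 𝒜}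

lemma imageSubobject_τ₂_le_sup (ψ : S₀ ⟶ S₂) (φ : S₁ ⟶ S₂) (hS₂ : S₂.Exact) [Epi S₁.g]
    (h₃ : imageSubobject ψ.τ₃ ≤ imageSubobject φ.τ₃) :
    imageSubobject ψ.τ₂ ≤ imageSubobject φ.τ₂ ⊔ imageSubobject S₂.f := by
  obtain ⟨A₁, π₁, _, c, hc⟩ := (imageSubobject_le_imageSubobject_iff (S₀.g ≫ ψ.τ₃) φ.τ₃).1
    ((imageSubobject_comp_le _ _).trans h₃)
  obtain ⟨A₂, π₂, _, b, hb⟩ := surjective_up_to_refinements_of_epi S₁.g c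
  have h_diff : (π₂ ≫ π₁ ≫ ψ.τ₂ - b ≫ φ.τ₂) ≫ S₂.g = 0 := by
    simp only [Preadditive.sub_comp, Category.assoc, ψ.comm₂₃, φ.comm₂₃, hc, reassoc_of% hb,
      sub_self]
  obtain ⟨A₃, π₃, _, a, ha⟩ := hS₂.exact_up_to_refinements _ h_diff
  rw [← imageSubobject_biprod_desc, imageSubobject_le_imageSubobject_iff]
  refine ⟨A₃, π₃ ≫ π₂ ≫ π₁, inferInstance, biprod.lift (π₃ ≫ b) a, ?_⟩
  rw [Preadditive.comp_sub, sub_eq_iff_eq_add'] at ha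
  simpa using ha

lemma imageSubobject_comp_τ₂_le (ψ : S₀ ⟶ S₂) (φ : S₁ ⟶ S₂) (χ : S₂ ⟶ S₃)
    (hS₂ : S₂.Exact) [Epi S₁.g] (h₁ : imageSubobject χ.τ₁ ≤ imageSubobject (φ ≫ χ).τ₁)
    (h₃ : imageSubobject ψ.τ₃ ≤ imageSubobject φ.τ₃) :
    imageSubobject (ψ ≫ χ).τ₂ ≤ imageSubobject (φ ≫ χ).τ₂ := by
  have h_sub : imageSubobject (S₂.f ≫ χ.τ₂) ≤ imageSubobject (φ ≫ χ).τ₂ := calc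
    imageSubobject (S₂.f ≫ χ.τ₂) = imageSubobject (χ.τ₁ ≫ S₃.f) := by rw [χ.comm₁₂]
    _ ≤ imageSubobject ((φ ≫ χ).τ₁ ≫ S₃.f) := imageSubobject_comp_mono h₁ _
    _ = imageSubobject (S₁.f ≫ (φ ≫ χ).τ₂) := by rw [(φ ≫ χ).comm₁₂]
    _ ≤ imageSubobject (φ ≫ χ).τ₂ := imageSubobject_comp_le _ _
  calc
    imageSubobject (ψ ≫ χ).τ₂ ≤ imageSubobject (φ ≫ χ).τ₂ ⊔ imageSubobject (S₂.f ≫ χ.τ₂) :=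
      imageSubobject_comp_le_sup (imageSubobject_τ₂_le_sup ψ φ hS₂ h₃) χ.τ₂
    _ ≤ imageSubobject (φ ≫ χ).τ₂ := sup_le le_rfl h_sub

end ShortComplex

section InverseSystem

lemma map_homOfLE_trans_op {C : Type*} [Category* C] {I : Type*} [Preorder I] (F : Iᵒᵖ ⥤ C)
    {i j k : I} (hij : i ≤ j) (hjk : j ≤ k) :
    F.map (homOfLE (hij.trans hjk)).op = F.map (homOfLE hjk).op ≫ F.map (homOfLE hij).op := by
  rw [← F.map_comp, ← op_comp, homOfLE_comp]

variable {𝒜 : Type u} [Category.{v} 𝒜] [Abelian 𝒜] {I : Type v} [PartialOrder I]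

lemma imageStabilization_iff_le (F : Iᵒᵖ ⥤ 𝒜) :
    ImageStabilization F ↔ ∀ i : I, ∃ (j : I) (hij : i ≤ j), ∀ (l : I) (hjl : j ≤ l),
      imageSubobject (F.map (homOfLE hij).op) ≤
        imageSubobject (F.map (homOfLE (hij.trans hjl)).op) := by
  refine forall_congr' fun i ↦ exists_congr fun j ↦ exists_congr fun hij ↦
    forall_congr' fun l ↦ forall_congr' fun hjl ↦ ⟨Eq.ge, fun h ↦ le_antisymm ?_ h⟩
  simp only [map_homOfLE_trans_op F hij hjl]
  exact imageSubobject_comp_le _ _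

theorem statement3_general (F' F F'' : Iᵒᵖ ⥤ 𝒜) (α : F' ⟶ F) (β : F ⟶ F'')
    (hw : ∀ i : I, α.app (op i) ≫ β.app (op i) = 0)
    (hexact : ∀ i : I, (ShortComplex.mk (α.app (op i)) (β.app (op i)) (hw i)).Exact)
    (hepi : ∀ i : I, Epi (β.app (op i)))
    (h' : ImageStabilization F') (h'' : ImageStabilization F'') :
    ImageStabilization F := by
  rw [imageStabilization_iff_le] at h' h'' ⊢
  let T : Iᵒᵖ ⥤ ShortComplex 𝒜 := (ShortComplex.functorEquivalence Iᵒᵖ 𝒜).functor.obj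
    (.mk α β (NatTrans.ext (funext fun i ↦ hw i.unop)))
  intro i
  obtain ⟨j, hij, hj⟩ := h' i
  obtain ⟨k, hjk, hk⟩ := h'' j
  refine ⟨k, hij.trans hjk, fun l hkl ↦ ?_⟩
  have hjl : j ≤ l := hjk.trans hkl
  have : Epi (T.obj (op l)).g := hepi l
  have h_images := imageSubobject_comp_τ₂_le (T.map (homOfLE hjk).op) (T.map (homOfLE hjl).op)
    (T.map (homOfLE hij).op) (hexact j)
    (by rw [← map_homOfLE_trans_op]; exact hj l hjl) (hk l hkl)
  rwa [← map_homOfLE_trans_op, ← map_homOfLE_trans_op] at h_images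

end InverseSystem

/-- if `0 ⟶ F′ ⟶ F ⟶ F″ ⟶ 0` is a short exact sequence of inverse systems
(objectwise short exact) and `F′`, `F″` satisfy the image-stabilization condition, then so
does `F`. -/
theorem statement3 {𝒜 : Type u} [Category.{v} 𝒜] [Abelian 𝒜]
    {I : Type v} [PartialOrder I] [IsDirected I (· ≤ ·)]
    (F' F F'' : Iᵒᵖ ⥤ 𝒜) (α : F' ⟶ F) (β : F ⟶ F'')
    (hw : ∀ i : I, α.app (op i) ≫ β.app (op i) = 0)
    (hse : ∀ i : I, (ShortComplex.mk (α.app (op i)) (β.app (op i)) (hw i)).ShortExact)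
    (h' : ImageStabilization F') (h'' : ImageStabilization F'') :
    ImageStabilization F := by
  exact statement3_general F' F F'' α β hw (fun i ↦ (hse i).exact) (fun i ↦ (hse i).epi_g) h' h''
end

section
/- Let 𝒜 be an abelian category, W an injective object of 𝒜, and I a countable directed partial order. Let F′, F, F″ : I ⥤ 𝒜 be functors together with natural transformations α : F′ ⟶ F and β : F ⟶ F″ such that for every i ∈ I the sequence 0 → F′(i) → F(i) → F″(i) → 0 is a short exact sequence in 𝒜, and assume that all transition morphisms F″(i) → F″(j) (for i ≤ j) are monomorphisms. Then the induced sequence of inverse limits of abelian groups 0 → lim_i Hom(F″(i), W) → lim_i Hom(F(i), W) → lim_i Hom(F′(i), W) → 0 is exact, where the limits are taken over Iᵒᵖ with transition maps given by precomposition with the transition morphisms, and the maps of the sequence are induced by composition with β and α. -/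
open CategoryTheory CategoryTheory.Limits

universe v u

/-- The inverse limit `lim_i Hom(F i, W)`, realized as the additive subgroup of compatible
families in `∏ i, (F.obj i ⟶ W)`, the transition maps being precomposition with the transition
morphisms of `F`. -/
def compatFamilies {𝒜 : Type u} [Category.{v} 𝒜] [Preadditive 𝒜] {I : Type v} [Preorder I]
    (F : I ⥤ 𝒜) (W : 𝒜) : AddSubgroup ((i : I) → (F.obj i ⟶ W)) where
  carrier := {x | ∀ (i j : I) (h : i ≤ j), F.map (homOfLE h) ≫ x j = x i}
  zero_mem' := by intro i j h; simp
  add_mem' := by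
    intro a b ha hb i j h
    simp only [Pi.add_apply, Preadditive.comp_add, ha i j h, hb i j h]
  neg_mem' := by
    intro a ha i j h
    simp only [Pi.neg_apply, Preadditive.comp_neg, ha i j h]

/-- The map `lim_i Hom(G i, W) → lim_i Hom(F i, W)` induced by a natural transformation
`τ : F ⟶ G`, given by composition with `τ`. -/
def limHomMap {𝒜 : Type u} [Category.{v} 𝒜] [Preadditive 𝒜] {I : Type v} [Preorder I]
    {F G : I ⥤ 𝒜} (τ : F ⟶ G) (W : 𝒜) :
    compatFamilies G W →+ compatFamilies F W where
  toFun x := ⟨fun i => τ.app i ≫ x.1 i, fun i j h => by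
    rw [← Category.assoc, τ.naturality, Category.assoc, x.2 i j h]⟩
  map_zero' := by
    apply Subtype.ext
    funext i
    simp
  map_add' a b := by
    apply Subtype.ext
    funext i
    simp [Preadditive.comp_add]

/-! Surjectivity is the delicate point. For a compatible family `y` on `F'`, the extensions of
`y i` along `α i` form an inverse system of nonempty sets. Two extensions differ by a morphism out
of `F'' i`, which extends along the monomorphism `F'' i ⟶ F'' j` because `W` is injective, so the
transition maps of this system are surjective. The Mittag-Leffler argument along a cofinal sequence
then produces a compatible family of extensions. -/

theorem nonempty_sections_of_surjective_map {I : Type*} [Preorder I] [IsDirectedOrder I]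
    [(Filter.atTop : Filter I).IsCountablyGenerated] (P : Iᵒᵖ ⥤ Type*)
    [∀ i, Nonempty (P.obj i)]
    (hP : ∀ (i j : I) (h : i ≤ j), Function.Surjective (P.map (homOfLE h).op)) :
    P.sections.Nonempty := by
  rcases isEmpty_or_nonempty I with _ | _
  · exact ⟨fun i => isEmptyElim i.unop, fun {i} => isEmptyElim i.unop⟩
  obtain ⟨s, hs, hs_top⟩ := Filter.exists_seq_monotone_tendsto_atTop_atTop I
  have : hs.functor.Final := hs.final_functor_iff.2 fun i => (hs_top.eventually_ge_atTop i).exists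
  obtain ⟨x, -⟩ := Types.surjective_π_app_zero_of_surjective_map
    (Types.limitConeIsLimit (hs.functor.op ⋙ P)) (fun n => hP _ _ (hs n.le_succ))
    (Classical.arbitrary _)
  obtain ⟨z, -⟩ := (hs.functor.op.bijective_sectionsPrecomp P).surjective x
  exact ⟨z.1, z.2⟩

section Preadditive

variable {𝒜 : Type u} [Category.{v} 𝒜] [Preadditive 𝒜]

theorem exists_desc_to_injective_of_exact {S : ShortComplex 𝒜} (hS : S.Exact) {W : 𝒜}
    [Injective W] (x : S.X₂ ⟶ W) (hx : S.f ≫ x = 0) : ∃ w : S.X₃ ⟶ W, S.g ≫ w = x := by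
  have := hS.hasHomology
  have := hS.mono_fromOpcycles
  obtain ⟨w, hw⟩ := Injective.factors (S.descOpcycles x hx) S.fromOpcycles
  exact ⟨w, by rw [← S.p_fromOpcycles, Category.assoc, hw, S.p_descOpcycles]⟩

theorem exists_extension_of_mono_τ₃ {S T : ShortComplex 𝒜} (φ : S ⟶ T) (hS : S.Exact)
    [Mono T.f] [Mono φ.τ₃] {W : 𝒜} [Injective W] (x : S.X₂ ⟶ W) (y : T.X₁ ⟶ W)
    (hxy : S.f ≫ x = φ.τ₁ ≫ y) :
    ∃ z : T.X₂ ⟶ W, T.f ≫ z = y ∧ φ.τ₂ ≫ z = x := by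
  obtain ⟨z, hz⟩ := Injective.factors y T.f
  have hdiff : S.f ≫ (φ.τ₂ ≫ z - x) = 0 := by
    rw [Preadditive.comp_sub, ← φ.comm₁₂_assoc, hz, hxy, sub_self]
  obtain ⟨w, hw⟩ := exists_desc_to_injective_of_exact hS _ hdiff
  obtain ⟨d, hd⟩ := Injective.factors w φ.τ₃
  refine ⟨z - T.g ≫ d, ?_, ?_⟩
  · rw [Preadditive.comp_sub, hz, T.zero_assoc, zero_comp, sub_zero]
  · rw [Preadditive.comp_sub, φ.comm₂₃_assoc, hd, hw, sub_sub_cancel]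

variable {I : Type v} [Preorder I] {F' F F'' : I ⥤ 𝒜}

theorem limHomMap_injective (β : F ⟶ F'') [∀ i, Epi (β.app i)] (W : 𝒜) :
    Function.Injective (limHomMap β W) := fun _ _ hab =>
  Subtype.ext <| funext fun i =>
    (cancel_epi (β.app i)).1 (congrFun (congrArg Subtype.val hab) i)

/-- The inverse system of extensions of a compatible family `y` on `F'` along `α : F' ⟶ F`: its
value at `i` is the set of morphisms `F.obj i ⟶ W` restricting to `y i` along `α.app i`, and its
transition maps are restriction along those of `F`. -/
def extensionSystem (α : F' ⟶ F) {W : 𝒜} (y : compatFamilies F' W) : Iᵒᵖ ⥤ Type v where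
  obj i := {x : F.obj i.unop ⟶ W // α.app i.unop ≫ x = y.1 i.unop}
  map f := ↾fun x => ⟨F.map f.unop ≫ x.1, by
    rw [← α.naturality_assoc, x.2]
    exact y.2 _ _ (leOfHom f.unop)⟩

theorem mem_range_limHomMap_of_nonempty_sections (α : F' ⟶ F) {W : 𝒜} (y : compatFamilies F' W)
    (hy : (extensionSystem α y).sections.Nonempty) : y ∈ Set.range (limHomMap α W) := by
  obtain ⟨x, hx⟩ := hy
  exact ⟨⟨fun i => (x (.op i)).1, fun i j h => congrArg Subtype.val (hx (homOfLE h).op)⟩,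
    Subtype.ext (funext fun i => (x (.op i)).2)⟩

variable {α : F' ⟶ F} {β : F ⟶ F''} {hw : ∀ i, α.app i ≫ β.app i = 0} {W : 𝒜} [Injective W]

theorem limHomMap_exact (hexact : ∀ i, (ShortComplex.mk (α.app i) (β.app i) (hw i)).Exact)
    [∀ i, Epi (β.app i)] :
    Function.Exact (limHomMap β W) (limHomMap α W) := by
  intro x
  constructor
  · intro hx
    have hαx (i : I) : α.app i ≫ x.1 i = 0 := congrFun (congrArg Subtype.val hx) i
    choose w hβw using fun i => exists_desc_to_injective_of_exact (hexact i) (x.1 i) (hαx i)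
    have hw_compat : w ∈ compatFamilies F'' W := fun i j h => by
      rw [← cancel_epi (β.app i), ← β.naturality_assoc, hβw, hβw, x.2 i j h]
    exact ⟨⟨w, hw_compat⟩, Subtype.ext (funext hβw)⟩
  · rintro ⟨w, rfl⟩
    refine Subtype.ext (funext fun i => ?_)
    change α.app i ≫ β.app i ≫ w.1 i = 0
    rw [reassoc_of% hw i, zero_comp]

theorem extensionSystem_map_surjective {i j : I} (h : i ≤ j)
    (hexact : (ShortComplex.mk (α.app i) (β.app i) (hw i)).Exact) [Mono (α.app j)]
    [Mono (F''.map (homOfLE h))] (y : compatFamilies F' W) :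
    Function.Surjective ((extensionSystem α y).map (homOfLE h).op) := by
  rintro ⟨x, hx⟩
  let φ : ShortComplex.mk (α.app i) (β.app i) (hw i) ⟶ .mk (α.app j) (β.app j) (hw j) :=
    { τ₁ := F'.map (homOfLE h), τ₂ := F.map (homOfLE h), τ₃ := F''.map (homOfLE h) }
  obtain ⟨z, hαz, hz⟩ := exists_extension_of_mono_τ₃ φ hexact x (y.1 j)
    (hx.trans (y.2 i j h).symm)
  exact ⟨⟨z, hαz⟩, Subtype.ext hz⟩

theorem limHomMap_surjective [IsDirectedOrder I] [(Filter.atTop : Filter I).IsCountablyGenerated]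
    (hexact : ∀ i, (ShortComplex.mk (α.app i) (β.app i) (hw i)).Exact)
    [∀ i, Mono (α.app i)] (hmono : ∀ (i j : I) (h : i ≤ j), Mono (F''.map (homOfLE h))) :
    Function.Surjective (limHomMap α W) := by
  intro y
  have (i : Iᵒᵖ) : Nonempty ((extensionSystem α y).obj i) :=
    let ⟨x, hx⟩ := Injective.factors (y.1 i.unop) (α.app i.unop)
    ⟨⟨x, hx⟩⟩
  refine mem_range_limHomMap_of_nonempty_sections α y
    (nonempty_sections_of_surjective_map _ fun i j h => ?_)
  have := hmono i j h
  exact extensionSystem_map_surjective h (hexact i) y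

end Preadditive

theorem statement9_general {𝒜 : Type u} [Category.{v} 𝒜] [Preadditive 𝒜]
    (W : 𝒜) [Injective W]
    {I : Type v} [Preorder I] [IsDirectedOrder I]
    [(Filter.atTop : Filter I).IsCountablyGenerated]
    (F' F F'' : I ⥤ 𝒜) (α : F' ⟶ F) (β : F ⟶ F'')
    (hw : ∀ i : I, α.app i ≫ β.app i = 0)
    (hse : ∀ i : I, (ShortComplex.mk (α.app i) (β.app i) (hw i)).ShortExact)
    (hmono : ∀ (i j : I) (h : i ≤ j), Mono (F''.map (homOfLE h))) :
    Function.Injective (limHomMap β W) ∧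
    Function.Exact (limHomMap β W) (limHomMap α W) ∧
    Function.Surjective (limHomMap α W) := by
  have (i : I) : Mono (α.app i) := (hse i).mono_f
  have (i : I) : Epi (β.app i) := (hse i).epi_g
  have hexact (i : I) := (hse i).exact
  exact ⟨limHomMap_injective β W, limHomMap_exact hexact, limHomMap_surjective hexact hmono⟩

/-- for an injective object `W` of an abelian category, a countable directed
partial order `I`, and an objectwise short exact sequence `0 ⟶ F′ ⟶ F ⟶ F″ ⟶ 0` of
`I`-indexed systems whose third term `F″` has monomorphic transition morphisms, the induced
sequence of inverse limits
`0 → lim Hom(F″ i, W) → lim Hom(F i, W) → lim Hom(F′ i, W) → 0` is exact. -/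
theorem statement9 {𝒜 : Type u} [Category.{v} 𝒜] [Abelian 𝒜]
    (W : 𝒜) [Injective W]
    {I : Type v} [PartialOrder I] [IsDirected I (· ≤ ·)] [Countable I]
    (F' F F'' : I ⥤ 𝒜) (α : F' ⟶ F) (β : F ⟶ F'')
    (hw : ∀ i : I, α.app i ≫ β.app i = 0)
    (hse : ∀ i : I, (ShortComplex.mk (α.app i) (β.app i) (hw i)).ShortExact)
    (hmono : ∀ (i j : I) (h : i ≤ j), Mono (F''.map (homOfLE h))) :
    Function.Injective (limHomMap β W) ∧
    Function.Exact (limHomMap β W) (limHomMap α W) ∧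
    Function.Surjective (limHomMap α W) :=
  statement9_general W F' F F'' α β hw hse hmono
end

section
/- Let k be a field, V a k-vector space, and S a nonempty family of k-subspaces of V such that: (i) for all W₁, W₂ ∈ S there exists W₃ ∈ S with W₃ ⊆ W₁ ∩ W₂; (ii) the quotient V/W is finite-dimensional for every W ∈ S; (iii) the canonical linear map from V to the inverse limit of the system (V/W)_{W ∈ S} is bijective. Let V^∨ denote the subspace of the algebraic dual of V consisting of those linear forms f : V → k that vanish on some W ∈ S. Then the evaluation map V → (V^∨)*, sending v to the linear form f ↦ f(v) on V^∨, is a linear isomorphism. -/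
universe u v

variable (k : Type u) (V : Type v) [Field k] [AddCommGroup V] [Module k V]

/-- The inverse limit of the quotients `V ⧸ W` over `W ∈ S`, with the canonical projections
`V ⧸ W′ → V ⧸ W` for `W′ ≤ W` as transition maps. -/
def invLimQuot (S : Set (Submodule k V)) : Type _ :=
  {x : (W : S) → V ⧸ (W : Submodule k V) //
    ∀ (W W' : S) (h : (W' : Submodule k V) ≤ (W : Submodule k V)),
      Submodule.mapQ (W' : Submodule k V) (W : Submodule k V) LinearMap.id
        (by simpa using h) (x W') = x W}

/-- The canonical map from `V` to the inverse limit of the quotients `V ⧸ W`, `W ∈ S`. -/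
def toInvLimQuot (S : Set (Submodule k V)) : V → invLimQuot k V S :=
  fun v => ⟨fun W => Submodule.Quotient.mk v, fun W W' h => by
    simp [Submodule.mapQ_apply]⟩

/-!
A functional on `V^∨` restricts along `(V ⧸ W)* ↪ V^∨` to a functional on `(V ⧸ W)*`, which is
evaluation at a unique point of `V ⧸ W` because `V ⧸ W` is reflexive. These points form a compatible
family, and a vector `v` evaluates to the given functional exactly when `v` maps to this family.
Hence the fibres of the evaluation map are fibres of `V → lim V ⧸ W`.
-/

section ContinuousDual

open Module

variable {R M : Type*} [CommRing R] [AddCommGroup M] [Module R M] {S : Set (Submodule R M)}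

/-- The dual `V^∨`: the span of the linear forms vanishing on some member of `S`. When `S` is
nonempty and downward directed, these forms already make up a submodule; see
`mem_continuousDual_iff`. -/
abbrev continuousDual (S : Set (Submodule R M)) : Submodule R (Dual R M) :=
  ⨆ W ∈ S, W.dualAnnihilator

theorem mem_continuousDual_iff (hne : S.Nonempty) (hdir : DirectedOn (· ≥ ·) S)
    {f : Dual R M} : f ∈ continuousDual S ↔ ∃ W ∈ S, ∀ v ∈ W, f v = 0 := by
  have : Nonempty S := hne.to_subtype
  have hann : Directed (· ≤ ·) fun W : S => (W : Submodule R M).dualAnnihilator :=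
    hdir.directed_val.mono_comp _ fun _ _ h => Submodule.dualAnnihilator_anti h
  simp only [continuousDual, iSup_subtype', Submodule.mem_iSup_of_directed _ hann,
    Submodule.mem_dualAnnihilator, Subtype.exists, exists_prop]

/-- The evaluation map `V → (V^∨)*`. -/
abbrev evalContinuousDual (S : Set (Submodule R M)) : M →ₗ[R] Dual R (continuousDual S) :=
  (continuousDual S).subtype.dualMap ∘ₗ Dual.eval R M

/-- The inclusion `(V ⧸ W)* → V^∨` of the linear forms that vanish on `W ∈ S`. -/
def dualQuotToContinuousDual (W : S) : Dual R (M ⧸ W.1) →ₗ[R] continuousDual S :=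
  Submodule.inclusion (le_biSup Submodule.dualAnnihilator W.2) ∘ₗ
    W.1.dualQuotEquivDualAnnihilator.toLinearMap

theorem dualQuotToContinuousDual_comp_mapQ {W W' : S} (h : W'.1 ≤ W.1) (g : Dual R (M ⧸ W.1)) :
    dualQuotToContinuousDual W' (g ∘ₗ Submodule.mapQ W'.1 W.1 LinearMap.id h) =
      dualQuotToContinuousDual W g :=
  rfl

theorem evalContinuousDual_comp_dualQuotToContinuousDual (v : M) (W : S) :
    evalContinuousDual S v ∘ₗ dualQuotToContinuousDual W =
      Dual.eval R (M ⧸ W.1) (Submodule.Quotient.mk v) :=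
  rfl

theorem dual_continuousDual_ext_iff {φ ψ : Dual R (continuousDual S)} :
    φ = ψ ↔ ∀ W : S, φ ∘ₗ dualQuotToContinuousDual W = ψ ∘ₗ dualQuotToContinuousDual W := by
  refine ⟨fun h W => h ▸ rfl, fun h => ?_⟩
  suffices hle : continuousDual S ≤ (LinearMap.eqLocus φ ψ).map (continuousDual S).subtype by
    ext ⟨f, hf⟩
    obtain ⟨f', hf', rfl⟩ := hle hf
    exact hf'
  refine iSup₂_le fun W hW f hf => ?_
  obtain ⟨g, hg⟩ := W.dualQuotEquivDualAnnihilator.surjective ⟨f, hf⟩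
  exact ⟨dualQuotToContinuousDual ⟨W, hW⟩ g, LinearMap.congr_fun (h ⟨W, hW⟩) g,
    congrArg Subtype.val hg⟩

section Reflexive

variable [∀ W : S, IsReflexive R (M ⧸ W.1)]

/-- The point of `V ⧸ W` that represents a functional on `V^∨` restricted to `(V ⧸ W)*`. -/
noncomputable def quotientPoint (φ : Dual R (continuousDual S)) (W : S) : M ⧸ W.1 :=
  (evalEquiv R (M ⧸ W.1)).symm (φ ∘ₗ dualQuotToContinuousDual W)

theorem apply_quotientPoint (φ : Dual R (continuousDual S)) (W : S) (g : Dual R (M ⧸ W.1)) :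
    g (quotientPoint φ W) = φ (dualQuotToContinuousDual W g) :=
  apply_evalEquiv_symm_apply R _ g _

theorem mapQ_quotientPoint (φ : Dual R (continuousDual S)) {W W' : S} (h : W'.1 ≤ W.1) :
    Submodule.mapQ W'.1 W.1 LinearMap.id h (quotientPoint φ W') = quotientPoint φ W := by
  refine (evalEquiv R (M ⧸ W.1)).injective (LinearMap.ext fun g => ?_)
  calc g (Submodule.mapQ W'.1 W.1 LinearMap.id h (quotientPoint φ W'))
      = φ (dualQuotToContinuousDual W' (g ∘ₗ Submodule.mapQ W'.1 W.1 LinearMap.id h)) :=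
        apply_quotientPoint φ W' (g ∘ₗ Submodule.mapQ W'.1 W.1 LinearMap.id h)
    _ = φ (dualQuotToContinuousDual W g) := by rw [dualQuotToContinuousDual_comp_mapQ]
    _ = g (quotientPoint φ W) := (apply_quotientPoint φ W g).symm

theorem evalContinuousDual_eq_iff {v : M} {φ : Dual R (continuousDual S)} :
    evalContinuousDual S v = φ ↔ ∀ W : S, Submodule.Quotient.mk v = quotientPoint φ W := by
  simp only [dual_continuousDual_ext_iff, evalContinuousDual_comp_dualQuotToContinuousDual,
    quotientPoint, LinearEquiv.eq_symm_apply, evalEquiv_apply]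

end Reflexive

end ContinuousDual

section InverseLimit

open Module

variable {k V} {S : Set (Submodule k V)} [∀ W : S, FiniteDimensional k (V ⧸ W.1)]

/-- The element of the inverse limit of the `V ⧸ W` that represents a functional on `V^∨`. -/
noncomputable def invLimPoint (φ : Dual k (continuousDual S)) : invLimQuot k V S :=
  ⟨quotientPoint φ, fun _ _ h => mapQ_quotientPoint φ h⟩

theorem toInvLimQuot_eq_invLimPoint_iff {v : V} {φ : Dual k (continuousDual S)} :
    toInvLimQuot k V S v = invLimPoint φ ↔ evalContinuousDual S v = φ := by
  rw [evalContinuousDual_eq_iff]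
  exact Subtype.ext_iff.trans funext_iff

theorem bijective_evalContinuousDual (hlim : Function.Bijective (toInvLimQuot k V S)) :
    Function.Bijective (evalContinuousDual S) := by
  refine (Function.bijective_iff_existsUnique _).2 fun φ => ?_
  simpa only [toInvLimQuot_eq_invLimPoint_iff] using hlim.existsUnique (invLimPoint φ)

end InverseLimit

/-- let `S` be a nonempty, downward-directed family of subspaces of `V` with
finite-dimensional quotients, such that `V` is the inverse limit of the `V ⧸ W`, `W ∈ S`.
Let `V^∨` be the subspace of the dual of `V` of forms vanishing on some `W ∈ S` (realized as
`⨆ W ∈ S, dualAnnihilator W`, whose carrier is exactly this set).  Then the evaluation map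
`V → (V^∨)*` is a linear isomorphism. -/
theorem statement10 (S : Set (Submodule k V)) (hne : S.Nonempty)
    (hdir : ∀ W₁ ∈ S, ∀ W₂ ∈ S, ∃ W₃ ∈ S, W₃ ≤ W₁ ⊓ W₂)
    (hfin : ∀ W ∈ S, FiniteDimensional k (V ⧸ W))
    (hlim : Function.Bijective (toInvLimQuot k V S)) :
    (∀ f : Module.Dual k V,
      f ∈ ⨆ W ∈ S, Submodule.dualAnnihilator W ↔ ∃ W ∈ S, ∀ v ∈ W, f v = 0) ∧
    Function.Bijective
      ⇑((⨆ W ∈ S, Submodule.dualAnnihilator W).subtype.dualMap ∘ₗ Module.Dual.eval k V) := by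
  have : ∀ W : S, FiniteDimensional k (V ⧸ W.1) := fun W => hfin W W.2
  have hdirOn : DirectedOn (· ≥ ·) S := fun W₁ h₁ W₂ h₂ =>
    (hdir W₁ h₁ W₂ h₂).imp fun _ ⟨h₃, hle⟩ => ⟨h₃, le_inf_iff.1 hle⟩
  exact ⟨fun _ => mem_continuousDual_iff hne hdirOn, bijective_evalContinuousDual hlim⟩
end
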